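/- Let T and S be bounded linear operators on H each admitting an A-adjoint. Then ω_A(TS) ≤ (1/2) · ( ω_A(ST) + ‖T‖_A · ‖S‖_A ). -/

import Mathlib

noncomputable section

open ContinuousLinearMap

variable {H : Type*} [NormedAddCommGroup H] [InnerProductSpace ℂ H] [CompleteSpace H]

/-- The semi-inner product induced by the positive operator `A`: `⟨x, y⟩_A := ⟨A x, y⟩`. -/
def innA (A : H →L[ℂ] H) (x y : H) : ℂ := inner ℂ (A x) y

/-- The seminorm induced by `A`: `‖x‖_A := ⟨x, x⟩_A ^ (1/2)`. -/
def vnormA (A : H →L[ℂ] H) (x : H) : ℝ := Real.sqrt (innA A x x).re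

/-- The `A`-operator seminorm: `‖T‖_A := sup {‖T x‖_A : ‖x‖_A = 1}`. -/
def opNormA (A T : H →L[ℂ] H) : ℝ :=
  sSup {c : ℝ | ∃ x : H, vnormA A x = 1 ∧ c = vnormA A (T x)}

/-- The `A`-numerical radius: `ω_A(T) := sup {|⟨T x, x⟩_A| : ‖x‖_A = 1}`. -/
def wA (A T : H →L[ℂ] H) : ℝ :=
  sSup {c : ℝ | ∃ x : H, vnormA A x = 1 ∧ c = ‖innA A (T x) x‖}

/-- `T` admits an `A`-adjoint: there is a bounded operator `X` with `A X = T* A`. -/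
def HasAAdjoint (A T : H →L[ℂ] H) : Prop :=
  ∃ X : H →L[ℂ] H, A ∘L X = adjoint T ∘L A

/-- `X` is the reduced `A`-adjoint `T^{♯_A}` of `T`: it solves `A X = T* A` and its range
is contained in the closure of the range of `A`. -/
def IsReducedAAdjoint (A T X : H →L[ℂ] H) : Prop :=
  (A ∘L X = adjoint T ∘L A) ∧ ∀ y : H, X y ∈ closure (Set.range A)

/-!
In the Hilbert space completion of `(H, ⟨·, ·⟩_A)`, rotating `S` by a phase reduces the claim to a
bound on the self-adjoint operator `R = TS + (TS)†`, namely `R ≤ k := ω(ST) + ‖T‖ ‖S‖`. The energy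
`⟨Gx, x⟩ = ‖T‖² ‖Sx‖² + ‖S‖² ‖T†x‖²` dominates a multiple of `⟨Rx, x⟩`, and since `S R` and `T† R`
involve `T` and `S` only through `ST`, `SS†`, `T†T` and `(ST)†` applied to `Sx` and `T†x`, also
`Re ⟨GRx, x⟩ ≤ k ⟨Gx, x⟩`. These two inequalities bound `l - R` from below for every `l > k ≥ 0`,
so no such `l` lies in the spectrum of `R`.

The completion is realised as the closure of the range of `√A`, in which `√A x` represents `x`. That
`A`-adjointable operators extend to it is Reid's inequality: if `AN` is self-adjoint then
`n ↦ ‖Nⁿx‖_A` is log-convex and `O(‖N‖ⁿ)`, whence `‖Nx‖_A ≤ ‖N‖ ‖x‖_A`. Apply it to `N = XT`, where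
`AX = T†A`.
-/

open scoped InnerProduct InnerProductSpace

theorem isUnit_of_isSelfAdjoint_of_mul_norm_le {𝕜 E : Type*} [RCLike 𝕜] [NormedAddCommGroup E]
    [InnerProductSpace 𝕜 E] [CompleteSpace E] {P : E →L[𝕜] E} (hP : IsSelfAdjoint P)
    {c : ℝ} (hc : 0 < c) (hPc : ∀ x, c * ‖x‖ ≤ ‖P x‖) : IsUnit P := by
  refine (isUnit_pow_iff two_ne_zero).1 <|
    isUnit_of_forall_le_norm_inner_map (P ^ 2) (c := ⟨c ^ 2, sq_nonneg c⟩) (pow_pos hc 2) fun x ↦ ?_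
  have hPP : ⟪(P ^ 2) x, x⟫_𝕜 = ⟪P x, P x⟫_𝕜 := by
    rw [sq, mul_apply_eq_comp, ← adjoint_inner_right, hP.adjoint_eq]
  calc ‖x‖ ^ 2 * c ^ 2 = (c * ‖x‖) ^ 2 := by ring
    _ ≤ ‖P x‖ ^ 2 := by gcongr; exact hPc x
    _ = ‖⟪(P ^ 2) x, x⟫_𝕜‖ := by rw [hPP, inner_self_eq_norm_sq_to_K]; simp

theorem mul_norm_le_mul_norm_smul_sub_apply {E : Type*} [NormedAddCommGroup E]
    [InnerProductSpace ℂ E] {R G : E →L[ℂ] E} {c k l : ℝ} (hkl : k ≤ l)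
    (hc : 0 ≤ c) (hRG : ∀ x, c * (⟪R x, x⟫_ℂ).re ≤ (⟪G x, x⟫_ℂ).re)
    (hGR : ∀ x, (⟪G (R x), x⟫_ℂ).re ≤ k * (⟪G x, x⟫_ℂ).re) (x : E) :
    c * l * (l - k) * ‖x‖ ≤ (‖G‖ + c * (l - k)) * ‖(l : ℂ) • x - R x‖ := by
  set p := (l : ℂ) • x - R x with hp
  rcases (norm_nonneg x).eq_or_lt with hx | hx
  · rw [← hx, mul_zero]
    have : 0 ≤ l - k := sub_nonneg.2 hkl
    positivity
  refine le_of_mul_le_mul_right ?_ hx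
  have hRx : (⟪R x, x⟫_ℂ).re = l * ‖x‖ ^ 2 - (⟪p, x⟫_ℂ).re := by
    rw [hp, inner_sub_left, inner_smul_left, inner_self_eq_norm_sq_to_K]
    simp [← Complex.ofReal_pow]
  have hGp : (⟪G p, x⟫_ℂ).re = l * (⟪G x, x⟫_ℂ).re - (⟪G (R x), x⟫_ℂ).re := by
    rw [hp, map_sub, map_smul, inner_sub_left, inner_smul_left, Complex.conj_ofReal,
      Complex.sub_re, Complex.re_ofReal_mul]
  have hpx : (⟪p, x⟫_ℂ).re ≤ ‖p‖ * ‖x‖ := re_inner_le_norm (𝕜 := ℂ) p x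
  have hGpx : (⟪G p, x⟫_ℂ).re ≤ ‖G‖ * ‖p‖ * ‖x‖ :=
    (re_inner_le_norm (𝕜 := ℂ) (G p) x).trans (by gcongr; exact G.le_opNorm p)
  have : 0 ≤ l - k := sub_nonneg.2 hkl
  calc c * l * (l - k) * ‖x‖ * ‖x‖ = (l - k) * (c * (⟪R x, x⟫_ℂ).re + c * (⟪p, x⟫_ℂ).re) := by
        rw [hRx]; ring
    _ ≤ (l - k) * ((⟪G x, x⟫_ℂ).re + c * (‖p‖ * ‖x‖)) := by gcongr; exact hRG x
    _ ≤ (⟪G p, x⟫_ℂ).re + (l - k) * (c * (‖p‖ * ‖x‖)) := by linarith [hGR x]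
    _ ≤ ‖G‖ * ‖p‖ * ‖x‖ + (l - k) * (c * (‖p‖ * ‖x‖)) := by gcongr
    _ = (‖G‖ + c * (l - k)) * ‖p‖ * ‖x‖ := by ring

section HilbertSpace

variable {E F : Type*} [NormedAddCommGroup E] [InnerProductSpace ℂ E] [CompleteSpace E]
  [NormedAddCommGroup F] [InnerProductSpace ℂ F] [CompleteSpace F]

theorem re_inner_le_of_lyapunov {R G : E →L[ℂ] E} (hR : IsSelfAdjoint R) {c k : ℝ}
    (hc : 0 < c) (hk : 0 ≤ k) (hRG : ∀ x, c * (⟪R x, x⟫_ℂ).re ≤ (⟪G x, x⟫_ℂ).re)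
    (hGR : ∀ x, (⟪G (R x), x⟫_ℂ).re ≤ k * (⟪G x, x⟫_ℂ).re) (x : E) :
    (⟪R x, x⟫_ℂ).re ≤ k * ‖x‖ ^ 2 := by
  have hspec : ∀ l ∈ spectrum ℝ R, l ≤ k := by
    intro l hl
    by_contra! hkl
    have : 0 < l - k := sub_pos.2 hkl
    have hl0 : 0 < l := hk.trans_lt hkl
    have hb : 0 < ‖G‖ + c * (l - k) := by positivity
    refine hl (isUnit_of_isSelfAdjoint_of_mul_norm_le ((IsSelfAdjoint.algebraMap _ (.all l)).sub hR)
      (c := c * l * (l - k) / (‖G‖ + c * (l - k))) (by positivity) fun y ↦ ?_)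
    rw [div_mul_eq_mul_div, div_le_iff₀' hb]
    exact mul_norm_le_mul_norm_smul_sub_apply hkl.le hc.le hRG hGR y
  have hle : R ≤ algebraMap ℝ (E →L[ℂ] E) k := le_algebraMap_of_spectrum_le hspec
  have hx : 0 ≤ (⟪(k : ℂ) • x - R x, x⟫_ℂ).re :=
    ((ContinuousLinearMap.le_def _ _).1 hle).re_inner_nonneg_left x
  rw [inner_sub_left, inner_smul_left, inner_self_eq_norm_sq_to_K] at hx
  simpa [← Complex.ofReal_pow] using hx

/-- The weighted energy operator `‖T‖² S†S + ‖S‖² TT†`, used as the Lyapunov operator `G` for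
`R = TS + (TS)†`. With these weights the off-diagonal terms of `GR`, of size `‖S‖²` and `‖T‖²`,
contribute exactly `‖T‖ ‖S‖`. -/
def lyapunovOp (T : F →L[ℂ] E) (S : E →L[ℂ] F) : E →L[ℂ] E :=
  ((‖T‖ ^ 2 : ℝ) : ℂ) • (S† ∘L S) + ((‖S‖ ^ 2 : ℝ) : ℂ) • (T ∘L T†)

theorem re_inner_lyapunovOp (T : F →L[ℂ] E) (S : E →L[ℂ] F) (x y : E) :
    (⟪lyapunovOp T S x, y⟫_ℂ).re =
      ‖T‖ ^ 2 * (⟪S x, S y⟫_ℂ).re + ‖S‖ ^ 2 * (⟪(T†) x, (T†) y⟫_ℂ).re := by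
  simp only [lyapunovOp, add_apply, smul_apply, comp_apply, inner_add_left, inner_smul_left,
    Complex.conj_ofReal, Complex.add_re, Complex.re_ofReal_mul, adjoint_inner_left,
    adjoint_inner_right]

theorem re_inner_lyapunovOp_self (T : F →L[ℂ] E) (S : E →L[ℂ] F) (x : E) :
    (⟪lyapunovOp T S x, x⟫_ℂ).re = ‖T‖ ^ 2 * ‖S x‖ ^ 2 + ‖S‖ ^ 2 * ‖(T†) x‖ ^ 2 := by
  rw [re_inner_lyapunovOp]
  congr 2 <;> exact inner_self_eq_norm_sq (𝕜 := ℂ) _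

theorem two_mul_norm_mul_norm_le_re_inner_lyapunovOp (T : F →L[ℂ] E) (S : E →L[ℂ] F) (x : E) :
    2 * (‖T‖ * ‖S‖) * (‖S x‖ * ‖(T†) x‖) ≤ (⟪lyapunovOp T S x, x⟫_ℂ).re := by
  rw [re_inner_lyapunovOp_self]
  linarith [two_mul_le_add_sq (‖T‖ * ‖S x‖) (‖S‖ * ‖(T†) x‖)]

theorem re_inner_add_adjoint_apply_self (Z : E →L[ℂ] E) (x : E) :
    (⟪(Z + Z†) x, x⟫_ℂ).re = 2 * (⟪Z x, x⟫_ℂ).re := by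
  rw [add_apply, inner_add_left, adjoint_inner_left, Complex.add_re, two_mul]
  exact congrArg _ (inner_re_symm (𝕜 := ℂ) x (Z x))

theorem norm_mul_norm_mul_re_inner_le (T : F →L[ℂ] E) (S : E →L[ℂ] F) (x : E) :
    ‖T‖ * ‖S‖ * (⟪(T ∘L S + (T ∘L S)†) x, x⟫_ℂ).re ≤ (⟪lyapunovOp T S x, x⟫_ℂ).re := by
  have hTS : (⟪T (S x), x⟫_ℂ).re ≤ ‖S x‖ * ‖(T†) x‖ := by
    rw [← adjoint_inner_right]
    exact re_inner_le_norm (𝕜 := ℂ) _ _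
  calc ‖T‖ * ‖S‖ * (⟪(T ∘L S + (T ∘L S)†) x, x⟫_ℂ).re
      = 2 * (‖T‖ * ‖S‖) * (⟪T (S x), x⟫_ℂ).re := by
        rw [re_inner_add_adjoint_apply_self, comp_apply]; ring
    _ ≤ 2 * (‖T‖ * ‖S‖) * (‖S x‖ * ‖(T†) x‖) := by gcongr
    _ ≤ _ := two_mul_norm_mul_norm_le_re_inner_lyapunovOp T S x

theorem re_inner_comp_adjoint_apply_le (S : E →L[ℂ] F) (u v : F) :
    (⟪S ((S†) v), u⟫_ℂ).re ≤ ‖S‖ ^ 2 * (‖u‖ * ‖v‖) :=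
  calc (⟪S ((S†) v), u⟫_ℂ).re ≤ ‖(S ∘L S†) v‖ * ‖u‖ := re_inner_le_norm (𝕜 := ℂ) _ _
    _ ≤ ‖S ∘L S†‖ * ‖v‖ * ‖u‖ := by gcongr; exact le_opNorm _ _
    _ ≤ ‖S‖ ^ 2 * (‖u‖ * ‖v‖) := by
      have : ‖S ∘L S†‖ ≤ ‖S‖ * ‖S†‖ := opNorm_comp_le _ _
      rw [LinearIsometryEquiv.norm_map, ← sq] at this
      rw [mul_assoc, mul_comm ‖v‖]
      gcongr

theorem re_inner_lyapunovOp_add_adjoint_apply_le {T : F →L[ℂ] E} {S : E →L[ℂ] F} {w : ℝ}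
    (hST : ∀ y, (⟪S (T y), y⟫_ℂ).re ≤ w * ‖y‖ ^ 2) (x : E) :
    (⟪lyapunovOp T S ((T ∘L S + (T ∘L S)†) x), x⟫_ℂ).re ≤
      (w + ‖T‖ * ‖S‖) * (⟪lyapunovOp T S x, x⟫_ℂ).re := by
  set u := S x
  set v := (T†) x
  have hRx : (T ∘L S + (T ∘L S)†) x = T u + (S†) v := by
    simp [adjoint_comp, u, v]
  have hS : (⟪S (T u + (S†) v), u⟫_ℂ).re ≤ w * ‖u‖ ^ 2 + ‖S‖ ^ 2 * (‖u‖ * ‖v‖) := by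
    rw [map_add, inner_add_left, Complex.add_re]
    exact add_le_add (hST u) (re_inner_comp_adjoint_apply_le S u v)
  have hT : (⟪(T†) (T u + (S†) v), v⟫_ℂ).re ≤ ‖T‖ ^ 2 * (‖u‖ * ‖v‖) + w * ‖v‖ ^ 2 := by
    rw [map_add, inner_add_left, Complex.add_re]
    refine add_le_add ?_ ?_
    · simpa [mul_comm] using re_inner_comp_adjoint_apply_le (T†) v u
    · rw [adjoint_inner_left, adjoint_inner_left]
      exact (inner_re_symm (𝕜 := ℂ) v (S (T v))).trans_le (hST v)
  have huv := two_mul_norm_mul_norm_le_re_inner_lyapunovOp T S x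
  rw [re_inner_lyapunovOp_self] at huv ⊢
  rw [re_inner_lyapunovOp, hRx]
  calc ‖T‖ ^ 2 * (⟪S (T u + (S†) v), u⟫_ℂ).re + ‖S‖ ^ 2 * (⟪(T†) (T u + (S†) v), v⟫_ℂ).re
      ≤ ‖T‖ ^ 2 * (w * ‖u‖ ^ 2 + ‖S‖ ^ 2 * (‖u‖ * ‖v‖)) +
          ‖S‖ ^ 2 * (‖T‖ ^ 2 * (‖u‖ * ‖v‖) + w * ‖v‖ ^ 2) := by gcongr
    _ = w * (‖T‖ ^ 2 * ‖u‖ ^ 2 + ‖S‖ ^ 2 * ‖v‖ ^ 2) +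
          ‖T‖ * ‖S‖ * (2 * (‖T‖ * ‖S‖) * (‖u‖ * ‖v‖)) := by ring
    _ ≤ w * (‖T‖ ^ 2 * ‖u‖ ^ 2 + ‖S‖ ^ 2 * ‖v‖ ^ 2) +
          ‖T‖ * ‖S‖ * (‖T‖ ^ 2 * ‖u‖ ^ 2 + ‖S‖ ^ 2 * ‖v‖ ^ 2) := by gcongr
    _ = (w + ‖T‖ * ‖S‖) * (‖T‖ ^ 2 * ‖u‖ ^ 2 + ‖S‖ ^ 2 * ‖v‖ ^ 2) := by ring

theorem re_inner_comp_apply_le {T : F →L[ℂ] E} {S : E →L[ℂ] F} {w : ℝ} (hw : 0 ≤ w)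
    (hST : ∀ y, (⟪S (T y), y⟫_ℂ).re ≤ w * ‖y‖ ^ 2) (x : E) :
    (⟪T (S x), x⟫_ℂ).re ≤ 1 / 2 * (w + ‖T‖ * ‖S‖) * ‖x‖ ^ 2 := by
  by_cases h0 : T = 0 ∨ S = 0
  · have hTSx : T (S x) = 0 := by rcases h0 with rfl | rfl <;> simp
    rw [hTSx, inner_zero_left, Complex.zero_re]
    positivity
  obtain ⟨hT, hS⟩ := not_or.1 h0
  have h := re_inner_le_of_lyapunov (IsSelfAdjoint.add_star_self (T ∘L S))
    (c := ‖T‖ * ‖S‖) (by positivity) (by positivity) (norm_mul_norm_mul_re_inner_le T S)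
    (re_inner_lyapunovOp_add_adjoint_apply_le hST) x
  rw [star_eq_adjoint, re_inner_add_adjoint_apply_self, comp_apply] at h
  linarith

theorem norm_inner_comp_apply_le {T : F →L[ℂ] E} {S : E →L[ℂ] F} {w : ℝ} (hw : 0 ≤ w)
    (hST : ∀ y, ‖⟪S (T y), y⟫_ℂ‖ ≤ w * ‖y‖ ^ 2) (x : E) :
    ‖⟪T (S x), x⟫_ℂ‖ ≤ 1 / 2 * (w + ‖T‖ * ‖S‖) * ‖x‖ ^ 2 := by
  obtain ⟨c, hc, hcx⟩ := RCLike.exists_norm_eq_mul_self ⟪T (S x), x⟫_ℂ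
  have hcST (y : F) : (⟪(star c • S) (T y), y⟫_ℂ).re ≤ w * ‖y‖ ^ 2 := by
    refine (Complex.re_le_norm _).trans ?_
    simpa [inner_smul_left, hc] using hST y
  have hx : ⟪T ((star c • S) x), x⟫_ℂ = ‖⟪T (S x), x⟫_ℂ‖ := by
    simpa [inner_smul_left, mul_comm] using hcx.symm
  have h := re_inner_comp_apply_le hw hcST x
  rwa [hx, Complex.ofReal_re, norm_smul, norm_star, hc, one_mul] at h

theorem norm_inner_comp_apply_le_of_denseRange {V W : Type*} [AddCommGroup V] [Module ℂ V]
    [AddCommGroup W] [Module ℂ W] {i : V →ₗ[ℂ] E} (hi : DenseRange i) {j : W →ₗ[ℂ] F}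
    (hj : DenseRange j) {T : W →ₗ[ℂ] V} {S : V →ₗ[ℂ] W} {t s w : ℝ} (ht : 0 ≤ t) (hs : 0 ≤ s)
    (hw : 0 ≤ w) (hT : ∀ y, ‖i (T y)‖ ≤ t * ‖j y‖) (hS : ∀ x, ‖j (S x)‖ ≤ s * ‖i x‖)
    (hST : ∀ y, ‖⟪j (S (T y)), j y⟫_ℂ‖ ≤ w * ‖j y‖ ^ 2) (x : V) :
    ‖⟪i (T (S x)), i x⟫_ℂ‖ ≤ 1 / 2 * (w + t * s) * ‖i x‖ ^ 2 := by
  let T' : F →L[ℂ] E := (i ∘ₗ T).extendOfNorm j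
  let S' : E →L[ℂ] F := (j ∘ₗ S).extendOfNorm i
  have hT'j (y : W) : T' (j y) = i (T y) := LinearMap.extendOfNorm_eq hj ⟨t, hT⟩ y
  have hS'i (x : V) : S' (i x) = j (S x) := LinearMap.extendOfNorm_eq hi ⟨s, hS⟩ x
  have hT' : ‖T'‖ ≤ t := LinearMap.opNorm_extendOfNorm_le hj ht hT
  have hS' : ‖S'‖ ≤ s := LinearMap.opNorm_extendOfNorm_le hi hs hS
  have hST' (z : F) : ‖⟪S' (T' z), z⟫_ℂ‖ ≤ w * ‖z‖ ^ 2 := by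
    refine hj.induction_on z (isClosed_le (by fun_prop) (by fun_prop)) fun y ↦ ?_
    simpa only [hT'j, hS'i] using hST y
  calc ‖⟪i (T (S x)), i x⟫_ℂ‖ = ‖⟪T' (S' (i x)), i x⟫_ℂ‖ := by rw [hS'i, hT'j]
    _ ≤ 1 / 2 * (w + ‖T'‖ * ‖S'‖) * ‖i x‖ ^ 2 := norm_inner_comp_apply_le hw hST' (i x)
    _ ≤ 1 / 2 * (w + t * s) * ‖i x‖ ^ 2 := by gcongr

end HilbertSpace

theorem le_mul_of_sq_le_mul_of_le_mul_pow {a : ℕ → ℝ} (ha : ∀ n, 0 ≤ a n)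
    (hlc : ∀ n, a (n + 1) ^ 2 ≤ a n * a (n + 2)) {C k : ℝ} (hk : 0 ≤ k)
    (hC : ∀ n, a n ≤ C * k ^ n) : a 1 ≤ k * a 0 := by
  by_contra! h
  have h1 : 0 < a 1 := (mul_nonneg hk (ha 0)).trans_lt h
  have h0 : 0 < a 0 := pos_of_mul_pos_left ((pow_pos h1 2).trans_le (hlc 0)) (ha 2)
  set r := a 1 / a 0
  have hr : 0 < r := div_pos h1 h0
  have hratio (n : ℕ) : 0 < a n ∧ r * a n ≤ a (n + 1) := by
    induction n with
    | zero => exact ⟨h0, (div_mul_cancel₀ _ h0.ne').le⟩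
    | succ n ih =>
      obtain ⟨hn, hrn⟩ := ih
      have hn1 : 0 < a (n + 1) := (mul_pos hr hn).trans_le hrn
      refine ⟨hn1, le_of_mul_le_mul_left ?_ hn⟩
      calc a n * (r * a (n + 1)) = r * a n * a (n + 1) := by ring
        _ ≤ a (n + 1) * a (n + 1) := by gcongr
        _ ≤ a n * a (n + 2) := by rw [← sq]; exact hlc n
  have hgrowth (n : ℕ) : a 0 * r ^ n ≤ a n := by
    simpa [mul_comm] using geom_le hr.le n fun m _ ↦ (hratio m).2
  have hC0 : 0 < C := h0.trans_le (by simpa using hC 0)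
  have hkr : k / r < 1 := (div_lt_one hr).2 ((lt_div_iff₀ h0).2 h)
  obtain ⟨n, hn⟩ := exists_pow_lt_of_lt_one (div_pos h0 hC0) hkr
  rw [div_pow, div_lt_div_iff₀ (pow_pos hr n) hC0] at hn
  linarith [hgrowth n, hC n]

section SemiInner

variable {E : Type*} [NormedAddCommGroup E] [InnerProductSpace ℂ E]

theorem vnormA_sq {A : E →L[ℂ] E} (hA : A.IsPositive) (x : E) :
    vnormA A x ^ 2 = (innA A x x).re :=
  Real.sq_sqrt (hA.re_inner_nonneg_left x)

theorem vnormA_nonneg (A : E →L[ℂ] E) (x : E) : 0 ≤ vnormA A x :=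
  Real.sqrt_nonneg _

theorem innA_smul_smul (A : E →L[ℂ] E) (c : ℂ) (x y : E) :
    innA A (c • x) (c • y) = ‖c‖ ^ 2 * innA A x y := by
  simp only [innA, map_smul, inner_smul_left, inner_smul_right, ← mul_assoc, Complex.mul_conj']

theorem opNormA_nonneg (A T : E →L[ℂ] E) : 0 ≤ opNormA A T :=
  Real.sSup_nonneg fun _ ⟨_, _, h⟩ ↦ h ▸ vnormA_nonneg A _

theorem wA_nonneg (A T : E →L[ℂ] E) : 0 ≤ wA A T :=
  Real.sSup_nonneg fun _ ⟨_, _, h⟩ ↦ h ▸ norm_nonneg _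

end SemiInner

section SemiHilbert

variable {A T : H →L[ℂ] H}

theorem innA_eq_inner_sqrt (hA : A.IsPositive) (x y : H) :
    innA A x y = ⟪CFC.sqrt A x, CFC.sqrt A y⟫_ℂ := by
  have hsa : IsSelfAdjoint (CFC.sqrt A) := (CFC.sqrt_nonneg A).isSelfAdjoint
  rw [← adjoint_inner_left, hsa.adjoint_eq, ← mul_apply_eq_comp,
    CFC.sqrt_mul_sqrt_self A (A.nonneg_iff_isPositive.2 hA), innA]

theorem vnormA_eq_norm_sqrt (hA : A.IsPositive) (x : H) : vnormA A x = ‖CFC.sqrt A x‖ := by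
  rw [vnormA, innA_eq_inner_sqrt hA, norm_eq_sqrt_re_inner (𝕜 := ℂ)]
  rfl

theorem norm_innA_le (hA : A.IsPositive) (x y : H) : ‖innA A x y‖ ≤ vnormA A x * vnormA A y := by
  rw [innA_eq_inner_sqrt hA, vnormA_eq_norm_sqrt hA, vnormA_eq_norm_sqrt hA]
  exact norm_inner_le_norm _ _

theorem vnormA_smul (hA : A.IsPositive) (c : ℂ) (x : H) :
    vnormA A (c • x) = ‖c‖ * vnormA A x := by
  simp only [vnormA_eq_norm_sqrt hA, map_smul, norm_smul]

theorem vnormA_inv_smul_self (hA : A.IsPositive) {x : H} (hx : vnormA A x ≠ 0) :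
    vnormA A (((vnormA A x)⁻¹ : ℂ) • x) = 1 := by
  rw [vnormA_smul hA, norm_inv, Complex.norm_of_nonneg (vnormA_nonneg A x), inv_mul_cancel₀ hx]

theorem exists_vnormA_eq_one (hA : A.IsPositive) (hA0 : A ≠ 0) : ∃ x, vnormA A x = 1 := by
  by_contra! h
  refine hA0 ?_
  have hsqrt : CFC.sqrt A = 0 := by
    ext x
    rw [zero_apply, ← norm_eq_zero, ← vnormA_eq_norm_sqrt hA]
    by_contra hx
    exact h _ (vnormA_inv_smul_self hA hx)
  rw [← CFC.sqrt_mul_sqrt_self A (A.nonneg_iff_isPositive.2 hA), hsqrt, zero_mul]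

theorem vnormA_apply_le_of_isSelfAdjoint_mul (hA : A.IsPositive) {N : H →L[ℂ] H}
    (hN : IsSelfAdjoint (A * N)) (x : H) : vnormA A (N x) ≤ ‖N‖ * vnormA A x := by
  have hsymm (y z : H) : innA A (N y) z = innA A y (N z) := by
    have hyz : ⟪(A * N) y, z⟫_ℂ = ⟪y, (A * N) z⟫_ℂ := hN.isSymmetric y z
    exact hyz.trans (hA.isSymmetric y (N z)).symm
  refine le_mul_of_sq_le_mul_of_le_mul_pow (a := fun n ↦ vnormA A ((N ^ n) x))
    (C := ‖CFC.sqrt A‖ * ‖x‖) (fun n ↦ vnormA_nonneg A _) (fun n ↦ ?_) (norm_nonneg N) fun n ↦ ?_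
  · have hshift : innA A ((N ^ (n + 1)) x) ((N ^ (n + 1)) x) =
        innA A ((N ^ n) x) ((N ^ (n + 2)) x) := by
      rw [pow_succ' N (n + 1), pow_succ' N n]
      exact hsymm _ _
    rw [vnormA_sq hA, hshift]
    exact (Complex.re_le_norm _).trans (norm_innA_le hA _ _)
  · have hpow : ‖(N ^ n) x‖ ≤ ‖N‖ ^ n * ‖x‖ := by
      rcases n.eq_zero_or_pos with rfl | hn
      · simp
      · exact le_of_opNorm_le _ (norm_pow_le' N hn) x
    rw [vnormA_eq_norm_sqrt hA]
    calc ‖CFC.sqrt A ((N ^ n) x)‖ ≤ ‖CFC.sqrt A‖ * (‖N‖ ^ n * ‖x‖) := le_opNorm_of_le _ hpow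
      _ = ‖CFC.sqrt A‖ * ‖x‖ * ‖N‖ ^ n := by ring

/-- `T` is `A`-bounded: bounded for the seminorm `‖·‖_A`. For such `T` the suprema defining `‖T‖_A`
and `ω_A(T)` are finite. -/
def IsABounded (A T : H →L[ℂ] H) : Prop :=
  ∃ c, ∀ x, vnormA A (T x) ≤ c * vnormA A x

theorem HasAAdjoint.isABounded (hA : A.IsPositive) (hT : HasAAdjoint A T) : IsABounded A T := by
  obtain ⟨X, hX⟩ := hT
  have hAXT : A * (X * T) = T† ∘L A ∘L T := by
    rw [← mul_assoc, mul_def A X, hX]; rfl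
  have hN : IsSelfAdjoint (A * (X * T)) := hAXT ▸ (hA.adjoint_conj T).isSelfAdjoint
  have hTx (x : H) : innA A (T x) (T x) = innA A ((X * T) x) x :=
    calc ⟪A (T x), T x⟫_ℂ = ⟪(T†) (A (T x)), x⟫_ℂ := (adjoint_inner_left T x (A (T x))).symm
      _ = ⟪(A * (X * T)) x, x⟫_ℂ := by rw [hAXT]; rfl
  refine ⟨√‖X * T‖, fun x ↦ ?_⟩
  rw [← sq_le_sq₀ (vnormA_nonneg A _) (mul_nonneg (Real.sqrt_nonneg _) (vnormA_nonneg A x))]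
  calc vnormA A (T x) ^ 2 = (innA A ((X * T) x) x).re := by rw [vnormA_sq hA, hTx]
    _ ≤ vnormA A ((X * T) x) * vnormA A x := (Complex.re_le_norm _).trans (norm_innA_le hA _ _)
    _ ≤ ‖X * T‖ * vnormA A x * vnormA A x :=
      mul_le_mul_of_nonneg_right (vnormA_apply_le_of_isSelfAdjoint_mul hA hN x)
        (vnormA_nonneg A x)
    _ = (√‖X * T‖ * vnormA A x) ^ 2 := by rw [mul_pow, Real.sq_sqrt (norm_nonneg _)]; ring

theorem IsABounded.vnormA_apply_le (hA : A.IsPositive) (hT : IsABounded A T) (x : H) :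
    vnormA A (T x) ≤ opNormA A T * vnormA A x := by
  obtain ⟨c, hc⟩ := hT
  rcases (vnormA_nonneg A x).eq_or_lt with h0 | h0
  · exact (hc x).trans_eq (by simp [← h0])
  have hbdd : BddAbove {c : ℝ | ∃ x : H, vnormA A x = 1 ∧ c = vnormA A (T x)} :=
    ⟨c, by rintro _ ⟨y, hy, rfl⟩; simpa [hy] using hc y⟩
  have hle := le_csSup hbdd ⟨_, vnormA_inv_smul_self hA h0.ne', rfl⟩
  rwa [map_smul, vnormA_smul hA, norm_inv, Complex.norm_of_nonneg h0.le, inv_mul_le_iff₀' h0]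
    at hle

theorem IsABounded.norm_innA_apply_le (hA : A.IsPositive) (hT : IsABounded A T) (x : H) :
    ‖innA A (T x) x‖ ≤ wA A T * vnormA A x ^ 2 := by
  rcases (vnormA_nonneg A x).eq_or_lt with h0 | h0
  · exact (norm_innA_le hA (T x) x).trans_eq (by simp [← h0])
  have hbdd : BddAbove {c : ℝ | ∃ x : H, vnormA A x = 1 ∧ c = ‖innA A (T x) x‖} := by
    refine ⟨opNormA A T, ?_⟩
    rintro _ ⟨y, hy, rfl⟩
    simpa [hy] using (norm_innA_le hA (T y) y).trans
      (mul_le_mul_of_nonneg_right (hT.vnormA_apply_le hA y) (vnormA_nonneg A y))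
  have hle := le_csSup hbdd ⟨_, vnormA_inv_smul_self hA h0.ne', rfl⟩
  rwa [map_smul, innA_smul_smul, norm_mul, norm_pow, Complex.norm_real, norm_norm, norm_inv,
    Complex.norm_of_nonneg h0.le, inv_pow, inv_mul_le_iff₀' (pow_pos h0 2)] at hle

theorem IsABounded.mul {S : H →L[ℂ] H} (hA : A.IsPositive) (hS : IsABounded A S)
    (hT : IsABounded A T) : IsABounded A (S * T) := by
  refine ⟨opNormA A S * opNormA A T, fun x ↦ ?_⟩
  calc vnormA A (S (T x)) ≤ opNormA A S * vnormA A (T x) := hS.vnormA_apply_le hA (T x)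
    _ ≤ opNormA A S * (opNormA A T * vnormA A x) :=
      mul_le_mul_of_nonneg_left (hT.vnormA_apply_le hA x) (opNormA_nonneg A S)
    _ = opNormA A S * opNormA A T * vnormA A x := by ring

theorem IsABounded.norm_innA_mul_apply_le {S : H →L[ℂ] H} (hA : A.IsPositive)
    (hT : IsABounded A T) (hS : IsABounded A S) (x : H) :
    ‖innA A ((T * S) x) x‖ ≤
      1 / 2 * (wA A (S * T) + opNormA A T * opNormA A S) * vnormA A x ^ 2 := by
  let K := (CFC.sqrt A).range.topologicalClosure
  let j : H →ₗ[ℂ] K := (CFC.sqrt A).toLinearMap.codRestrict K fun y ↦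
    Submodule.le_topologicalClosure _ (LinearMap.mem_range_self _ y)
  have hj : DenseRange j := by
    refine Subtype.dense_iff.2 ?_
    rw [← Set.range_comp]
    exact subset_rfl
  have hvnorm (y : H) : vnormA A y = ‖j y‖ := vnormA_eq_norm_sqrt hA y
  have hinn (y z : H) : innA A y z = ⟪j y, j z⟫_ℂ := innA_eq_inner_sqrt hA y z
  rw [hvnorm, hinn]
  refine norm_inner_comp_apply_le_of_denseRange hj hj (T := T.toLinearMap) (S := S.toLinearMap)
    (opNormA_nonneg A T) (opNormA_nonneg A S) (wA_nonneg A (S * T)) ?_ ?_ ?_ x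
  · simpa only [coe_coe, hvnorm] using hT.vnormA_apply_le hA
  · simpa only [coe_coe, hvnorm] using hS.vnormA_apply_le hA
  · simpa only [coe_coe, mul_apply_eq_comp, hvnorm, hinn] using (hS.mul hA hT).norm_innA_apply_le hA

end SemiHilbert

theorem stmt3_general (A : H →L[ℂ] H) (hA : A.IsPositive) (hA0 : A ≠ 0)
    (T S : H →L[ℂ] H) (hT : IsABounded A T) (hS : IsABounded A S) :
    wA A (T * S) ≤ (1 / 2) * (wA A (S * T) + opNormA A T * opNormA A S) := by
  obtain ⟨x₀, hx₀⟩ := exists_vnormA_eq_one hA hA0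
  refine csSup_le ⟨_, x₀, hx₀, rfl⟩ ?_
  rintro _ ⟨x, hx, rfl⟩
  simpa [hx] using hT.norm_innA_mul_apply_le hA hS x

theorem stmt3 (A : H →L[ℂ] H) (hA : A.IsPositive) (hA0 : A ≠ 0)
    (T S : H →L[ℂ] H) (hT : HasAAdjoint A T) (hS : HasAAdjoint A S) :
    wA A (T * S) ≤ (1 / 2) * (wA A (S * T) + opNormA A T * opNormA A S) :=
  stmt3_general A hA hA0 T S (hT.isABounded hA) (hS.isABounded hA)
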